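/- arXiv:2604.13295 — 2 statements merged into one kernel-verified Lean document; each statement's English description precedes it below -/
import Mathlib

section
/- Fix σ > 0, δ ∈ (0, 1/2), and a function r = r(d) ∈ (0,1) with r(d)·d^{1/6−δ/3} → ∞ as d → ∞. There exist constants c > 0, c' > 0, C > 0 such that the following holds for all sufficiently large d. Set n = ⌈e^{c·d^{2δ}}⌉, let x_1, …, x_n be independent uniform random points on the unit sphere S^{d−1} ⊂ ℝ^d, and form the t-SNE input distribution P with all bandwidths equal to σ. Then with probability at least 1 − e^{−c'·d^{2δ}}, every global minimizer Y = (y_1, …, y_n) ∈ (ℝ²)^n of the t-SNE objective D(P‖Q) has at least (1 − r(d))·n of its points contained in some open ball of radius r(d), and all n points contained in some ball of radius C·√(r(d)). -/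
open MeasureTheory Filter Finset
open scoped Classical

noncomputable section

/-- The uniform (normalized surface) probability measure on the unit sphere in `ℝ^d`. -/
def sphereUniform (d : ℕ) : Measure (Metric.sphere (0 : EuclideanSpace ℝ (Fin d)) 1) :=
  ((volume : Measure (EuclideanSpace ℝ (Fin d))).toSphere Set.univ)⁻¹ •
    (volume : Measure (EuclideanSpace ℝ (Fin d))).toSphere

/-- t-SNE conditional probability `p_{j|i}`. -/
def pcond {N d : ℕ} (x : Fin N → EuclideanSpace ℝ (Fin d)) (σ : Fin N → ℝ) (i j : Fin N) : ℝ :=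
  Real.exp (-‖x i - x j‖ ^ 2 / (2 * σ i ^ 2)) /
    ∑ k ∈ Finset.univ.erase i, Real.exp (-‖x i - x k‖ ^ 2 / (2 * σ i ^ 2))

/-- t-SNE pair probability `p_{ij} = (p_{i|j} + p_{j|i})/N`. -/
def pmat {N d : ℕ} (x : Fin N → EuclideanSpace ℝ (Fin d)) (σ : Fin N → ℝ) (i j : Fin N) : ℝ :=
  (pcond x σ j i + pcond x σ i j) / N

/-- Normalization constant `Z` of the t-SNE output similarities. -/
def Zsum {N s : ℕ} (y : Fin N → EuclideanSpace ℝ (Fin s)) : ℝ :=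
  ∑ i, ∑ j, if i < j then (1 + ‖y i - y j‖ ^ 2)⁻¹ else 0

/-- t-SNE output pair probability `q_{ij}`. -/
def qmat {N s : ℕ} (y : Fin N → EuclideanSpace ℝ (Fin s)) (i j : Fin N) : ℝ :=
  (1 + ‖y i - y j‖ ^ 2)⁻¹ / Zsum y

/-- KL divergence between two arrays indexed by unordered pairs `{i,j}`, `i < j`. -/
def KLpairs {N : ℕ} (p q : Fin N → Fin N → ℝ) : ℝ :=
  ∑ i, ∑ j, if i < j then p i j * Real.log (p i j / q i j) else 0


theorem four_points_alg (D0 u0 u1 v0 v1 w0 w1 : ℝ) (hD : 0 < D0)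
    (h1 : |u0^2+u1^2 - D0| ≤ D0/30) (h2 : |v0^2+v1^2 - D0| ≤ D0/30)
    (h3 : |w0^2+w1^2 - D0| ≤ D0/30)
    (h4 : |(u0-v0)^2+(u1-v1)^2 - D0| ≤ D0/30)
    (h5 : |(u0-w0)^2+(u1-w1)^2 - D0| ≤ D0/30)
    (h6 : |(v0-w0)^2+(v1-w1)^2 - D0| ≤ D0/30) : False := by
  obtain ⟨a, ha⟩ : ∃ a, a = u0^2+u1^2 := ⟨_, rfl⟩
  obtain ⟨b, hb⟩ : ∃ a, a = v0^2+v1^2 := ⟨_, rfl⟩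
  obtain ⟨c, hc⟩ : ∃ a, a = w0^2+w1^2 := ⟨_, rfl⟩
  obtain ⟨x, hx⟩ : ∃ a, a = u0*v0+u1*v1 := ⟨_, rfl⟩
  obtain ⟨y, hy⟩ : ∃ a, a = u0*w0+u1*w1 := ⟨_, rfl⟩
  obtain ⟨z, hz⟩ : ∃ a, a = v0*w0+v1*w1 := ⟨_, rfl⟩
  have det : a*(b*c-z^2) = x*(x*c - y*z) + y*(y*b - x*z) := by subst_vars; ring
  have e4 : (u0-v0)^2+(u1-v1)^2 = a + b - 2*x := by subst_vars; ring
  have e5 : (u0-w0)^2+(u1-w1)^2 = a + c - 2*y := by subst_vars; ring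
  have e6 : (v0-w0)^2+(v1-w1)^2 = b + c - 2*z := by subst_vars; ring
  rw [← ha] at h1; rw [← hb] at h2; rw [← hc] at h3
  rw [e4] at h4; rw [e5] at h5; rw [e6] at h6
  rw [abs_le] at h1 h2 h3 h4 h5 h6
  have xl : 9/20*D0 ≤ x := by linarith
  have xu : x ≤ 11/20*D0 := by linarith
  have yl : 9/20*D0 ≤ y := by linarith
  have yu : y ≤ 11/20*D0 := by linarith
  have zl : 9/20*D0 ≤ z := by linarith
  have zu : z ≤ 11/20*D0 := by linarith
  have al : 29/30*D0 ≤ a := by linarith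
  have bl : 29/30*D0 ≤ b := by linarith
  have cl : 29/30*D0 ≤ c := by linarith
  have bu : b ≤ 31/30*D0 := by linarith
  have cu : c ≤ 31/30*D0 := by linarith
  have P1 : (29/30*D0)*(29/30*D0) ≤ b*c := by gcongr; linarith
  have P2 : z^2 ≤ (11/20*D0)^2 := by gcongr; linarith
  have P3 : x*c ≤ (11/20*D0)*(31/30*D0) := by gcongr; linarith
  have P4 : y*b ≤ (11/20*D0)*(31/30*D0) := by gcongr; linarith
  have P5 : (9/20*D0)*(9/20*D0) ≤ y*z := by gcongr; linarith
  have P6 : (9/20*D0)*(9/20*D0) ≤ x*z := by gcongr; linarith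
  have Q1 : 6*D0^2/10 ≤ b*c-z^2 := by linarith [sq_nonneg D0]
  have Q2 : x*c-y*z ≤ 4*D0^2/10 := by linarith [sq_nonneg D0]
  have Q3 : y*b-x*z ≤ 4*D0^2/10 := by linarith [sq_nonneg D0]
  have R1 : (29/30*D0)*(6*D0^2/10) ≤ a*(b*c-z^2) := by gcongr; linarith
  have R2 : x*(x*c-y*z) ≤ (11/20*D0)*(4*D0^2/10) := by
    calc x*(x*c-y*z) ≤ x*(4*D0^2/10) := by gcongr; linarith
      _ ≤ _ := by gcongr
  have R3 : y*(y*b-x*z) ≤ (11/20*D0)*(4*D0^2/10) := by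
    calc y*(y*b-x*z) ≤ y*(4*D0^2/10) := by gcongr; linarith
      _ ≤ _ := by gcongr
  have : 0 < D0^3 := by positivity
  linarith

theorem four_points (a b c d : EuclideanSpace ℝ (Fin 2)) (D0 : ℝ) (hD : 0 < D0)
    (h1 : |‖a - b‖^2 - D0| ≤ D0/30) (h2 : |‖a - c‖^2 - D0| ≤ D0/30)
    (h3 : |‖a - d‖^2 - D0| ≤ D0/30) (h4 : |‖b - c‖^2 - D0| ≤ D0/30)
    (h5 : |‖b - d‖^2 - D0| ≤ D0/30) (h6 : |‖c - d‖^2 - D0| ≤ D0/30) : False := by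
  simp only [EuclideanSpace.norm_sq_eq, Fin.sum_univ_two, Real.norm_eq_abs, sq_abs, PiLp.sub_apply] at *
  refine four_points_alg D0 (a 0 - b 0) (a 1 - b 1) (a 0 - c 0) (a 1 - c 1) (a 0 - d 0) (a 1 - d 1) hD h1 h2 h3 ?_ ?_ ?_
  · convert h4 using 3; ring
  · convert h5 using 3; ring
  · convert h6 using 3; ring

/-- four points in terms of weights -/
theorem four_points_w (a b c d : EuclideanSpace ℝ (Fin 2)) (m : ℝ) (hm : 0 < m) (hm1 : m < 1)
    (h1 : ((1+‖a - b‖^2)⁻¹ - m)^2 ≤ (m*(1-m)/40)^2) (h2 : ((1+‖a - c‖^2)⁻¹ - m)^2 ≤ (m*(1-m)/40)^2)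
    (h3 : ((1+‖a - d‖^2)⁻¹ - m)^2 ≤ (m*(1-m)/40)^2) (h4 : ((1+‖b - c‖^2)⁻¹ - m)^2 ≤ (m*(1-m)/40)^2)
    (h5 : ((1+‖b - d‖^2)⁻¹ - m)^2 ≤ (m*(1-m)/40)^2) (h6 : ((1+‖c - d‖^2)⁻¹ - m)^2 ≤ (m*(1-m)/40)^2) :
    False := by
  have key : ∀ D : ℝ, 0 ≤ D → ((1+D)⁻¹ - m)^2 ≤ (m*(1-m)/40)^2 →
      |D - (1-m)/m| ≤ ((1-m)/m)/30 := by
    intro D hD h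
    have h0 : 0 ≤ m*(1-m)/40 := by have : 0 < 1 - m := by linarith
                                   positivity
    have h' := abs_le_of_sq_le_sq h h0
    obtain ⟨w, hw⟩ : ∃ w, w = (1+D)⁻¹ := ⟨_, rfl⟩
    have hwp : 0 < w := by rw [hw]; positivity
    have hDw : D = 1/w - 1 := by rw [hw]; field_simp; ring
    rw [← hw] at h'
    rw [abs_le] at h'
    have hml : 39/40*m ≤ w := by nlinarith [mul_pos hm hm]
    rw [hDw]
    have e : 1/w - 1 - (1-m)/m = (m-w)/(m*w) := by field_simp; ring
    rw [e, abs_div, abs_of_pos (mul_pos hm hwp), div_le_iff₀ (mul_pos hm hwp)]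
    have e2 : (1-m)/m/30*(m*w) = (1-m)*w/30 := by field_simp
    rw [e2]
    rw [abs_le]
    have := mul_le_mul_of_nonneg_left hml (by linarith : (0:ℝ) ≤ 1 - m)
    have h0' : 0 ≤ (1-m)*m := mul_nonneg (by linarith) hm.le
    constructor <;> linarith
  exact four_points a b c d ((1-m)/m) (div_pos (by linarith) hm) (key _ (by positivity) h1)
    (key _ (by positivity) h2) (key _ (by positivity) h3) (key _ (by positivity) h4)
    (key _ (by positivity) h5) (key _ (by positivity) h6)

/-- finding a good 4-tuple -/
theorem good_tuple {n : ℕ} (b : Fin n → Fin n → ℝ) (hb : ∀ i j, b i j = 0 ∨ b i j = 1)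
    (hs : ∑ i, ∑ j, b i j < (n:ℝ)^2/6) :
    ∃ i j k l, b i j = 0 ∧ b i k = 0 ∧ b i l = 0 ∧ b j k = 0 ∧ b j l = 0 ∧ b k l = 0 := by
  by_contra hcon
  push Not at hcon
  have hnn : ∀ i j, 0 ≤ b i j := fun i j => by rcases hb i j with h | h <;> rw [h] <;> norm_num
  have h1 : ∀ i j k l, 1 ≤ b i j + b i k + b i l + b j k + b j l + b k l := by
    intro i j k l
    have := hcon i j k l
    have a1 := hnn i j; have a2 := hnn i k; have a3 := hnn i l
    have a4 := hnn j k; have a5 := hnn j l; have a6 := hnn k l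
    rcases hb i j with h | h
    · rcases hb i k with h' | h'
      · rcases hb i l with h2 | h2
        · rcases hb j k with h3 | h3
          · rcases hb j l with h4 | h4
            · rcases hb k l with h5 | h5
              · exact absurd h5 (this h h' h2 h3 h4)
              · linarith
            · linarith
          · linarith
        · linarith
      · linarith
    · linarith
  have h2 : ∑ i : Fin n, ∑ j : Fin n, ∑ k : Fin n, ∑ l : Fin n, (1:ℝ) ≤
      ∑ i, ∑ j, ∑ k, ∑ l, (b i j + b i k + b i l + b j k + b j l + b k l) := by
    gcongr; exact h1 _ _ _ _
  simp only [Finset.sum_add_distrib, Finset.sum_const, Finset.card_univ, Fintype.card_fin, nsmul_eq_mul, ← Finset.mul_sum] at h2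
  have hn : 0 < (n:ℝ)^2 := by
    have : 0 ≤ ∑ i, ∑ j, b i j := Finset.sum_nonneg fun i _ => Finset.sum_nonneg fun j _ => hnn i j
    linarith
  nlinarith

theorem var_bound {ι : Type*} (T : Finset ι) (hT : T.Nonempty) (p D : ι → ℝ) (η m : ℝ)
    (hp : ∀ a ∈ T, |(T.card : ℝ) * p a - 1| ≤ η) (hsum : ∑ a ∈ T, p a = 1)
    (hD : ∀ a ∈ T, 0 ≤ D a)
    (hmin : ∀ t : ℝ, 0 < t → ∑ a ∈ T, p a * Real.log (1 + D a) + Real.log (∑ a ∈ T, (1 + D a)⁻¹) ≤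
      ∑ a ∈ T, p a * Real.log (1 + t * D a) + Real.log (∑ a ∈ T, (1 + t * D a)⁻¹))
    (hm : ∑ a ∈ T, (1 + D a)⁻¹ = T.card * m) :
    ∑ a ∈ T, ((1 + D a)⁻¹ - m) ^ 2 ≤ T.card * (η * m * m) ∧
    ∑ a ∈ T, ((1 + D a)⁻¹ - m) ^ 2 ≤ T.card * (η * m * (1 - m)) := by
  have hN : (0:ℝ) < T.card := by exact_mod_cast hT.card_pos
  have hpos : ∀ a ∈ T, 0 < 1 + D a := fun a ha => by linarith [hD a ha]
  have hZ : 0 < ∑ a ∈ T, (1 + D a)⁻¹ := Finset.sum_pos (fun a ha => inv_pos.2 (hpos a ha)) hT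
  have hmp : 0 < m := by
    rw [hm] at hZ; exact (pos_iff_pos_of_mul_pos hZ).1 hN
  have hlin : ∀ a, HasDerivAt (fun t : ℝ => 1 + t * D a) (D a) 1 := fun a => by
    simpa using ((hasDerivAt_id (1:ℝ)).mul_const (D a)).const_add 1
  have d1 : HasDerivAt (fun t : ℝ => ∑ a ∈ T, p a * Real.log (1 + t * D a))
      (∑ a ∈ T, p a * (D a / (1 + 1 * D a))) 1 := by
    apply HasDerivAt.fun_sum
    intro a ha
    exact ((hlin a).log (by rw [one_mul]; exact (hpos a ha).ne')).const_mul _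
  have d2 : HasDerivAt (fun t : ℝ => ∑ a ∈ T, (1 + t * D a)⁻¹)
      (∑ a ∈ T, -(D a) / (1 + 1 * D a) ^ 2) 1 := by
    apply HasDerivAt.fun_sum
    intro a ha
    exact (hlin a).fun_inv (by rw [one_mul]; exact (hpos a ha).ne')
  have d3 := d1.add (d2.log (by simp only [one_mul]; exact hZ.ne'))
  have hlm : IsLocalMin ((fun t : ℝ => ∑ a ∈ T, p a * Real.log (1 + t * D a)) +
      fun t : ℝ => Real.log (∑ a ∈ T, (1 + t * D a)⁻¹)) 1 := by
    filter_upwards [lt_mem_nhds (zero_lt_one : (0:ℝ) < 1)] with t ht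
    simpa using hmin t ht
  have h0 := hlm.hasDerivAt_eq_zero d3
  simp only [one_mul] at h0
  have e1 : ∑ a ∈ T, p a * (D a / (1 + D a)) = 1 - ∑ a ∈ T, p a * (1 + D a)⁻¹ := by
    rw [eq_sub_iff_add_eq, ← Finset.sum_add_distrib]
    refine Eq.trans (Finset.sum_congr rfl fun a ha => ?_) hsum
    have := (hpos a ha).ne'
    field_simp; ring
  have e2 : ∑ a ∈ T, -(D a) / (1 + D a) ^ 2 = ∑ a ∈ T, ((1 + D a)⁻¹)^2 - T.card * m := by
    rw [← hm, ← Finset.sum_sub_distrib]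
    refine Finset.sum_congr rfl fun a ha => ?_
    have := (hpos a ha).ne'
    field_simp; ring
  rw [e1, e2, hm] at h0
  obtain ⟨S, hS⟩ : ∃ S, S = ∑ a ∈ T, p a * (1 + D a)⁻¹ := ⟨_, rfl⟩
  obtain ⟨Q, hQ⟩ : ∃ S, S = ∑ a ∈ T, ((1 + D a)⁻¹)^2 := ⟨_, rfl⟩
  have eV : ∑ a ∈ T, ((1 + D a)⁻¹ - m) ^ 2 = Q - T.card * m^2 := by
    have : ∀ a, ((1 + D a)⁻¹ - m) ^ 2 = ((1 + D a)⁻¹)^2 - 2*m*(1 + D a)⁻¹ + m^2 := fun a => by ring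
    simp only [this, Finset.sum_add_distrib, Finset.sum_sub_distrib, ← Finset.mul_sum, hm, ← hQ,
      Finset.sum_const, nsmul_eq_mul]
    ring
  rw [← hS, ← hQ] at h0
  have hQe : Q = T.card * m * S := by
    have : (T.card : ℝ) * m ≠ 0 := by positivity
    field_simp at h0
    linarith
  have eV2 : ∑ a ∈ T, ((1 + D a)⁻¹ - m) ^ 2 = m * (T.card * S - T.card * m) := by
    rw [eV, hQe]; ring
  have b1 : T.card * S - T.card * m ≤ η * (T.card * m) := by
    rw [hS, ← hm, Finset.mul_sum, Finset.mul_sum, ← Finset.sum_sub_distrib]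
    refine Finset.sum_le_sum fun a ha => ?_
    have h1 := (abs_le.1 (hp a ha)).2
    have h2 := inv_pos.2 (hpos a ha)
    nlinarith
  have b2 : T.card * S - T.card * m ≤ η * (T.card * (1 - m)) := by
    have : (T.card:ℝ) * (1 - m) = ∑ a ∈ T, (1 - (1 + D a)⁻¹) := by
      rw [Finset.sum_sub_distrib, hm]; simp; ring
    rw [this, Finset.mul_sum]
    have : T.card * S - T.card * m = ∑ a ∈ T, (1 - T.card * p a) * (1 - (1 + D a)⁻¹) := by
      have h : ∀ a, (1 - T.card * p a) * (1 - (1 + D a)⁻¹) = 1 - (1 + D a)⁻¹ - T.card * p a + T.card * (p a * (1 + D a)⁻¹) := fun a => by ring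
      simp only [h, Finset.sum_add_distrib, Finset.sum_sub_distrib, ← Finset.mul_sum, hm, ← hS,
        hsum, Finset.sum_const, nsmul_eq_mul]
      ring
    rw [this]
    refine Finset.sum_le_sum fun a ha => ?_
    have h1 := (abs_le.1 (hp a ha)).1
    have h2 : (1 + D a)⁻¹ ≤ 1 := inv_le_one_of_one_le₀ (by linarith [hD a ha])
    have h3 : 0 ≤ 1 - (1 + D a)⁻¹ := by linarith
    exact mul_le_mul_of_nonneg_right (by linarith) h3
  rw [eV2]
  constructor
  · nlinarith [mul_le_mul_of_nonneg_left b1 hmp.le]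
  · nlinarith [mul_le_mul_of_nonneg_left b2 hmp.le]

def TT (n : ℕ) : Finset (Fin n × Fin n) := Finset.univ.filter (fun a => a.1 < a.2)

theorem sum_TT {n : ℕ} (h : Fin n → Fin n → ℝ) :
    (∑ i, ∑ j, if i < j then h i j else 0) = ∑ a ∈ TT n, h a.1 a.2 := by
  rw [TT, Finset.sum_filter, Fintype.sum_prod_type]

theorem sum_TT_symm {n : ℕ} (h : Fin n → Fin n → ℝ) (hs : ∀ i j, h i j = h j i) :
    2 * ∑ a ∈ TT n, h a.1 a.2 = ∑ i, ∑ j, if i = j then 0 else h i j := by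
  have e : ∀ i j, (if i = j then 0 else h i j) = (if i < j then h i j else 0) + (if j < i then h j i else 0) := by
    intro i j
    rcases lt_trichotomy i j with h1 | h1 | h1
    · simp [h1, h1.ne, h1.le]
    · simp [h1]
    · simp [h1, h1.ne', h1.le, hs i j]
  simp only [e, Finset.sum_add_distrib]
  rw [Finset.sum_comm (f := fun i j => if j < i then h j i else 0), sum_TT, two_mul]

theorem card_TT (n : ℕ) : 2 * ((TT n).card : ℝ) = n * (n - 1) := by
  have := sum_TT_symm (n := n) (fun _ _ => 1) (fun _ _ => rfl)
  simp only [Finset.sum_const, nsmul_eq_mul, mul_one] at this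
  rw [this]
  have : ∀ i j : Fin n, (if i = j then (0:ℝ) else 1) = 1 - if i = j then 1 else 0 := by
    intro i j; split_ifs <;> norm_num
  simp only [this, Finset.sum_sub_distrib]
  simp
  ring

theorem sum_TT_star {n : ℕ} (g : Fin n → Fin n → ℝ) (hs : ∀ i j, g i j = g j i) (k : Fin n)
    (h0 : ∀ i j, i ≠ k → j ≠ k → g i j = 0) :
    ∑ a ∈ TT n, g a.1 a.2 = ∑ j, if j = k then 0 else g k j := by
  have := sum_TT_symm g hs
  have e : ∀ i j, (if i = j then 0 else g i j) =
      (if i = k then (if j = k then 0 else g k j) else 0) + (if j = k then (if i = k then 0 else g k i) else 0) := by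
    intro i j
    by_cases hi : i = k
    · subst hi
      by_cases hj : j = i
      · subst hj; simp
      · simp [hj, Ne.symm hj]
    · by_cases hj : j = k
      · subst hj; simp [hi, hs]
      · simp [hi, hj, h0 i j hi hj]
  simp only [e, Finset.sum_add_distrib] at this
  have e1 : ∑ x, ∑ x_1, (if x = k then (if x_1 = k then 0 else g k x_1) else 0) = ∑ j, if j = k then 0 else g k j := by
    rw [Finset.sum_comm]; simp
  have e2 : ∑ x, ∑ x_1, (if x_1 = k then (if x = k then 0 else g k x) else 0) = ∑ j, if j = k then 0 else g k j := by
    simp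
  rw [e1, e2] at this
  linarith

theorem KL_red {n : ℕ} (hn : 2 ≤ n) (p : Fin n → Fin n → ℝ)
    (hp : ∀ i j, i < j → 0 < p i j) (hsum : ∑ a ∈ TT n, p a.1 a.2 = 1)
    (y : Fin n → EuclideanSpace ℝ (Fin 2)) :
    KLpairs p (qmat y) = ∑ a ∈ TT n, p a.1 a.2 * Real.log (p a.1 a.2) +
      (∑ a ∈ TT n, p a.1 a.2 * Real.log (1 + ‖y a.1 - y a.2‖ ^ 2) +
        Real.log (∑ a ∈ TT n, (1 + ‖y a.1 - y a.2‖ ^ 2)⁻¹)) := by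
  have hT : (TT n).Nonempty := ⟨(⟨0, by omega⟩, ⟨1, by omega⟩), by simp [TT]⟩
  have hZ : 0 < ∑ a ∈ TT n, (1 + ‖y a.1 - y a.2‖ ^ 2)⁻¹ :=
    Finset.sum_pos (fun a _ => by positivity) hT
  have hZe : Zsum y = ∑ a ∈ TT n, (1 + ‖y a.1 - y a.2‖ ^ 2)⁻¹ := by
    rw [Zsum, sum_TT (fun i j => (1 + ‖y i - y j‖ ^ 2)⁻¹)]
  rw [KLpairs, sum_TT (fun i j => p i j * Real.log (p i j / qmat y i j))]
  simp only [qmat, hZe]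
  obtain ⟨Z, hZd⟩ : ∃ Z, Z = ∑ a ∈ TT n, (1 + ‖y a.1 - y a.2‖ ^ 2)⁻¹ := ⟨_, rfl⟩
  rw [← hZd] at hZ ⊢
  have e : ∀ a ∈ TT n, p a.1 a.2 * Real.log (p a.1 a.2 / ((1 + ‖y a.1 - y a.2‖ ^ 2)⁻¹ / Z)) =
      p a.1 a.2 * Real.log (p a.1 a.2) + (p a.1 a.2 * Real.log (1 + ‖y a.1 - y a.2‖ ^ 2) + p a.1 a.2 * Real.log Z) := by
    intro a ha
    have h1 := hp a.1 a.2 (by simpa [TT] using ha)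
    have h2 : 0 < 1 + ‖y a.1 - y a.2‖ ^ 2 := by positivity
    rw [Real.log_div h1.ne' (by positivity), Real.log_div (by positivity) hZ.ne', Real.log_inv]
    ring
  rw [Finset.sum_congr rfl e, Finset.sum_add_distrib, Finset.sum_add_distrib, ← Finset.sum_mul, hsum, one_mul]

/-- first estimate : mean of weights close to one -/
theorem mean_bound {n : ℕ} (hn : 12 ≤ n) (p : Fin n → Fin n → ℝ) (η : ℝ) (hη : η ≤ 1/10^8)
    (hp : ∀ a ∈ TT n, |((TT n).card : ℝ) * p a.1 a.2 - 1| ≤ η) (hsum : ∑ a ∈ TT n, p a.1 a.2 = 1)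
    (y : Fin n → EuclideanSpace ℝ (Fin 2))
    (hmin : ∀ y' : Fin n → EuclideanSpace ℝ (Fin 2),
      ∑ a ∈ TT n, p a.1 a.2 * Real.log (1 + ‖y a.1 - y a.2‖ ^ 2) +
        Real.log (∑ a ∈ TT n, (1 + ‖y a.1 - y a.2‖ ^ 2)⁻¹) ≤
      ∑ a ∈ TT n, p a.1 a.2 * Real.log (1 + ‖y' a.1 - y' a.2‖ ^ 2) +
        Real.log (∑ a ∈ TT n, (1 + ‖y' a.1 - y' a.2‖ ^ 2)⁻¹))
    (m : ℝ) (hm : ∑ a ∈ TT n, (1 + ‖y a.1 - y a.2‖ ^ 2)⁻¹ = (TT n).card * m) :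
    0 < m ∧ m ≤ 1 ∧ 1 - m ≤ 83200 * η := by
  have hT : (TT n).Nonempty := ⟨(⟨0, by omega⟩, ⟨1, by omega⟩), by simp [TT]⟩
  have hN : (0:ℝ) < (TT n).card := by exact_mod_cast hT.card_pos
  have hη0 : 0 ≤ η := by
    obtain ⟨a, ha⟩ := hT
    exact (abs_nonneg _).trans (hp a ha)
  have hmp : 0 < m := by
    have hZ : 0 < ∑ a ∈ TT n, (1 + ‖y a.1 - y a.2‖ ^ 2)⁻¹ :=
      Finset.sum_pos (fun a _ => by positivity) hT
    rw [hm] at hZ; exact (pos_iff_pos_of_mul_pos hZ).1 hN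
  have hm1 : m ≤ 1 := by
    have : ∑ a ∈ TT n, (1 + ‖y a.1 - y a.2‖ ^ 2)⁻¹ ≤ ∑ a ∈ TT n, (1:ℝ) :=
      Finset.sum_le_sum fun a _ => inv_le_one_of_one_le₀ (by linarith [sq_nonneg ‖y a.1 - y a.2‖])
    rw [hm, Finset.sum_const, nsmul_eq_mul, mul_one] at this
    nlinarith
  refine ⟨hmp, hm1, ?_⟩
  rcases hm1.eq_or_lt with h1 | h1
  · rw [h1]; linarith
  have hscale : ∀ t : ℝ, 0 < t → ∑ a ∈ TT n, p a.1 a.2 * Real.log (1 + ‖y a.1 - y a.2‖ ^ 2) +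
        Real.log (∑ a ∈ TT n, (1 + ‖y a.1 - y a.2‖ ^ 2)⁻¹) ≤
      ∑ a ∈ TT n, p a.1 a.2 * Real.log (1 + t * ‖y a.1 - y a.2‖ ^ 2) +
        Real.log (∑ a ∈ TT n, (1 + t * ‖y a.1 - y a.2‖ ^ 2)⁻¹) := by
    intro t ht
    have := hmin (fun i => Real.sqrt t • y i)
    simpa only [← smul_sub, norm_smul, mul_pow, Real.norm_eq_abs, sq_abs, Real.sq_sqrt ht.le] using this
  obtain ⟨v1, v2⟩ := var_bound (TT n) hT (fun a => p a.1 a.2) (fun a => ‖y a.1 - y a.2‖ ^ 2) η m hp hsum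
    (fun a _ => by positivity) hscale hm
  -- lower bound on variance
  have h1m : 0 < 1 - m := by linarith
  have ht : 0 < (m*(1-m)/40)^2 := by positivity
  have low : (TT n).card * ((m*(1-m)/40)^2/13) ≤ ∑ a ∈ TT n, ((1 + ‖y a.1 - y a.2‖ ^ 2)⁻¹ - m) ^ 2 := by
    by_contra hlt
    push Not at hlt
    obtain ⟨i, j, k, l, g1, g2, g3, g4, g5, g6⟩ := good_tuple
      (fun i j => if i = j then 1 else if ((1 + ‖y i - y j‖ ^ 2)⁻¹ - m) ^ 2 ≤ (m*(1-m)/40)^2 then 0 else 1)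
      (fun i j => by split_ifs <;> simp) (by
        have e : ∀ i j, (if i = j then (1:ℝ) else if ((1 + ‖y i - y j‖ ^ 2)⁻¹ - m) ^ 2 ≤ (m*(1-m)/40)^2 then 0 else 1) ≤
          (if i = j then (1:ℝ) else 0) + (if i = j then 0 else ((1 + ‖y i - y j‖ ^ 2)⁻¹ - m) ^ 2) / (m*(1-m)/40)^2 := by
          intro i j
          split_ifs with q1 q2
          · simp
          · simp only [zero_add]; positivity
          · rw [zero_add, one_le_div ht]; exact (not_le.1 q2).le
        have s1 : ∑ i : Fin n, ∑ j : Fin n, (if i = j then (1:ℝ) else if ((1 + ‖y i - y j‖ ^ 2)⁻¹ - m) ^ 2 ≤ (m*(1-m)/40)^2 then 0 else 1) ≤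
          ∑ i : Fin n, ∑ j : Fin n, ((if i = j then (1:ℝ) else 0) + (if i = j then 0 else ((1 + ‖y i - y j‖ ^ 2)⁻¹ - m) ^ 2) / (m*(1-m)/40)^2) :=
          Finset.sum_le_sum fun i _ => Finset.sum_le_sum fun j _ => e i j
        refine s1.trans_lt ?_
        simp only [Finset.sum_add_distrib, ← Finset.sum_div]
        rw [← sum_TT_symm (fun i j => ((1 + ‖y i - y j‖ ^ 2)⁻¹ - m) ^ 2) (fun i j => by rw [norm_sub_rev])]
        have s2 : (2 * ∑ a ∈ TT n, ((1 + ‖y a.1 - y a.2‖ ^ 2)⁻¹ - m) ^ 2) / (m*(1-m)/40)^2 ≤ (n:ℝ)*(n-1)/13 := by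
          rw [← card_TT n, div_le_iff₀ ht]
          linarith
        have s3 : ∑ i : Fin n, ∑ j : Fin n, (if i = j then (1:ℝ) else 0) = n := by simp
        rw [s3]
        have hn' : (12:ℝ) ≤ n := by exact_mod_cast hn
        nlinarith)
    have tr : ∀ i j : Fin n, (if i = j then (1:ℝ) else if ((1 + ‖y i - y j‖ ^ 2)⁻¹ - m) ^ 2 ≤ (m*(1-m)/40)^2 then 0 else 1) = 0 →
        ((1 + ‖y i - y j‖ ^ 2)⁻¹ - m) ^ 2 ≤ (m*(1-m)/40)^2 := by
      intro i j h
      split_ifs at h with q1 q2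
      · simp at h
      · exact q2
      · simp at h
    exact four_points_w (y i) (y j) (y k) (y l) m hmp h1 (tr _ _ g1) (tr _ _ g2) (tr _ _ g3)
      (tr _ _ g4) (tr _ _ g5) (tr _ _ g6)
  have w1 := le_of_mul_le_mul_left (low.trans v1) hN
  have w2 := le_of_mul_le_mul_left (low.trans v2) hN
  have w1' : (1-m)^2/20800 ≤ η := by
    have : m^2 * ((1-m)^2/20800) ≤ m^2 * η := by linarith
    exact le_of_mul_le_mul_left this (by positivity)
  have w2' : m * (1-m)/20800 ≤ η := by
    have : (m*(1-m)) * (m * (1-m)/20800) ≤ (m*(1-m)) * η := by linarith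
    exact le_of_mul_le_mul_left this (by positivity)
  have hm2 : 1/4 ≤ m := by
    by_contra hc
    push Not at hc
    nlinarith
  nlinarith


theorem log_ge_aux (D : ℝ) (hD : 0 ≤ D) :
    (1 - (1 + D)⁻¹) + (1 - (1 + D)⁻¹)^2/2 ≤ Real.log (1 + D) := by
  have h0 : 0 < (1 + D)⁻¹ := by positivity
  have hu0 : 0 ≤ 1 - (1 + D)⁻¹ := by
    have : (1 + D)⁻¹ ≤ 1 := inv_le_one_of_one_le₀ (by linarith)
    linarith
  have hu : |1 - (1 + D)⁻¹| < 1 := by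
    rw [abs_of_nonneg hu0]; linarith
  have hs := Real.hasSum_pow_div_log_of_abs_lt_one hu
  have e : -Real.log (1 - (1 - (1 + D)⁻¹)) = Real.log (1 + D) := by
    rw [sub_sub_cancel, Real.log_inv, neg_neg]
  rw [e] at hs
  have := sum_le_hasSum (Finset.range 2) (fun i _ => by positivity) hs
  simp [Finset.sum_range_succ] at this
  norm_num at this
  exact this

set_option maxHeartbeats 2000000 in
theorem det_main {n : ℕ} (hn : 12 ≤ n) (p : Fin n → Fin n → ℝ) (hps : ∀ i j, p i j = p j i)
    (η r : ℝ) (hr : 0 < r) (hr1 : r < 1) (hη : 10^8 * η ≤ r^3)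
    (hp : ∀ i j, i ≠ j → |((TT n).card : ℝ) * p i j - 1| ≤ η) (hsum : ∑ a ∈ TT n, p a.1 a.2 = 1)
    (y : Fin n → EuclideanSpace ℝ (Fin 2))
    (hmin : ∀ y' : Fin n → EuclideanSpace ℝ (Fin 2),
      ∑ a ∈ TT n, p a.1 a.2 * Real.log (1 + ‖y a.1 - y a.2‖ ^ 2) +
        Real.log (∑ a ∈ TT n, (1 + ‖y a.1 - y a.2‖ ^ 2)⁻¹) ≤
      ∑ a ∈ TT n, p a.1 a.2 * Real.log (1 + ‖y' a.1 - y' a.2‖ ^ 2) +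
        Real.log (∑ a ∈ TT n, (1 + ‖y' a.1 - y' a.2‖ ^ 2)⁻¹)) :
    ∃ c₀ : EuclideanSpace ℝ (Fin 2),
      (1 - r) * n ≤ (Finset.univ.filter (fun i : Fin n => y i ∈ Metric.ball c₀ r)).card ∧
      ∀ i : Fin n, y i ∈ Metric.closedBall c₀ (2 * Real.sqrt r) := by
  have hn0 : (12:ℝ) ≤ n := by exact_mod_cast hn
  have hT : (TT n).Nonempty := ⟨(⟨0, by omega⟩, ⟨1, by omega⟩), by simp [TT]⟩
  have hN : (0:ℝ) < (TT n).card := by exact_mod_cast hT.card_pos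
  have hp' : ∀ a ∈ TT n, |((TT n).card : ℝ) * p a.1 a.2 - 1| ≤ η := by
    intro a ha
    refine hp _ _ ?_
    have : a.1 < a.2 := by simpa [TT] using ha
    exact this.ne
  have hη0 : 0 ≤ η := by
    obtain ⟨a, ha⟩ := hT
    exact (abs_nonneg _).trans (hp' a ha)
  have hr2 : r^3 ≤ r^2 := pow_le_pow_of_le_one hr.le hr1.le (by norm_num)
  have hr3 : r^2 ≤ r := by nlinarith
  have hη1 : η ≤ 1/10^8 := by linarith
  obtain ⟨m, hm⟩ : ∃ m : ℝ, ∑ a ∈ TT n, (1 + ‖y a.1 - y a.2‖ ^ 2)⁻¹ = (TT n).card * m :=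
    ⟨(∑ a ∈ TT n, (1 + ‖y a.1 - y a.2‖ ^ 2)⁻¹) / (TT n).card, by field_simp⟩
  obtain ⟨hm0, hm1, hmK⟩ := mean_bound hn p η hη1 hp' hsum y hmin m hm
  have hmhalf : 99/100 ≤ m := by linarith
  -- mean of L
  have hLp : ∑ a ∈ TT n, p a.1 a.2 * Real.log (1 + ‖y a.1 - y a.2‖ ^ 2) ≤ 166400 * η := by
    have h := hmin (fun _ => 0)
    rw [hm] at h
    simp only [sub_self, norm_zero, ne_eq, OfNat.ofNat_ne_zero, not_false_eq_true, zero_pow, add_zero,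
      Real.log_one, mul_zero, Finset.sum_const_zero, zero_add, inv_one, Finset.sum_const, nsmul_eq_mul, mul_one] at h
    rw [Real.log_mul hN.ne' hm0.ne'] at h
    have h2 := Real.one_sub_inv_le_log_of_pos hm0
    have h3 : m⁻¹ ≤ 1 + 166400*η := by
      rw [inv_le_iff_one_le_mul₀ hm0]
      nlinarith
    linarith
  have hLnn : ∀ i j, 0 ≤ Real.log (1 + ‖y i - y j‖ ^ 2) := fun i j =>
    Real.log_nonneg (by linarith [sq_nonneg ‖y i - y j‖])
  have hL : ∑ a ∈ TT n, Real.log (1 + ‖y a.1 - y a.2‖ ^ 2) ≤ (TT n).card * (332800 * η) := by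
    have : (1/2) * ∑ a ∈ TT n, Real.log (1 + ‖y a.1 - y a.2‖ ^ 2) ≤
        (TT n).card * ∑ a ∈ TT n, p a.1 a.2 * Real.log (1 + ‖y a.1 - y a.2‖ ^ 2) := by
      rw [Finset.mul_sum, Finset.mul_sum]
      refine Finset.sum_le_sum fun a ha => ?_
      rw [← mul_assoc]
      refine mul_le_mul_of_nonneg_right ?_ (hLnn _ _)
      have := (abs_le.1 (hp' a ha)).1
      linarith
    have := mul_le_mul_of_nonneg_left hLp hN.le
    linarith
  obtain ⟨i, hi⟩ : ∃ i : Fin n, ∑ j, Real.log (1 + ‖y i - y j‖ ^ 2) ≤ n * (332800 * η) := by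
    by_contra hc
    push Not at hc
    have h1 : ∑ i : Fin n, (n * (332800 * η) : ℝ) ≤ ∑ i, ∑ j, Real.log (1 + ‖y i - y j‖ ^ 2) :=
      Finset.sum_le_sum fun i _ => (hc i).le
    have h1' : ∑ i : Fin n, (n * (332800 * η) : ℝ) < ∑ i, ∑ j, Real.log (1 + ‖y i - y j‖ ^ 2) :=
      Finset.sum_lt_sum_of_nonempty ⟨⟨0, by omega⟩, Finset.mem_univ _⟩ fun i _ => hc i
    have h2 := sum_TT_symm (fun i j => Real.log (1 + ‖y i - y j‖ ^ 2)) (fun i j => by rw [norm_sub_rev])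
    have h3 : ∀ i j, (if i = j then 0 else Real.log (1 + ‖y i - y j‖ ^ 2)) = Real.log (1 + ‖y i - y j‖ ^ 2) := by
      intro i j
      split_ifs with h
      · simp [h]
      · rfl
    simp only [h3] at h2
    rw [← h2] at h1'
    simp only [Finset.sum_const, Finset.card_univ, Fintype.card_fin, nsmul_eq_mul] at h1'
    have h4 := card_TT n
    have h5 : ((TT n).card : ℝ) * (332800*η) * 2 ≤ n * (n * (332800 * η)) := by
      have : 0 ≤ (n:ℝ) * (332800*η) := by positivity
      calc ((TT n).card : ℝ) * (332800*η) * 2 = (2 * (TT n).card) * (332800*η) := by ring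
        _ = n * (n * (332800 * η)) - n * (332800*η) := by rw [h4]; ring
        _ ≤ _ := by linarith
    linarith
  have hLu : ∀ i j, (1 - (1 + ‖y i - y j‖ ^ 2)⁻¹) + (1 - (1 + ‖y i - y j‖ ^ 2)⁻¹)^2/2 ≤ Real.log (1 + ‖y i - y j‖ ^ 2) :=
    fun i j => log_ge_aux _ (by positivity)
  have hu0 : ∀ i j, 0 ≤ 1 - (1 + ‖y i - y j‖ ^ 2)⁻¹ := by
    intro i j
    have : (1 + ‖y i - y j‖ ^ 2)⁻¹ ≤ 1 := inv_le_one_of_one_le₀ (by linarith [sq_nonneg ‖y i - y j‖])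
    linarith
  have hu1 : ∀ i j, 1 - (1 + ‖y i - y j‖ ^ 2)⁻¹ ≤ 1 := by
    intro i j
    have : 0 < (1 + ‖y i - y j‖ ^ 2)⁻¹ := by positivity
    linarith
  have hLu' : ∀ i j, (1 - (1 + ‖y i - y j‖ ^ 2)⁻¹) ≤ Real.log (1 + ‖y i - y j‖ ^ 2) := fun i j => by
    linarith [hLu i j, sq_nonneg (1 - (1 + ‖y i - y j‖ ^ 2)⁻¹)]
  refine ⟨y i, ?_, ?_⟩
  · -- counting
    have hbad : ((Finset.univ.filter (fun j : Fin n => ¬ y j ∈ Metric.ball (y i) r)).card : ℝ) * (r^2/2) ≤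
        n * (332800 * η) := by
      refine le_trans ?_ hi
      rw [← nsmul_eq_mul]
      refine le_trans ?_ (Finset.sum_le_univ_sum_of_nonneg (s := Finset.univ.filter (fun j : Fin n => ¬ y j ∈ Metric.ball (y i) r)) (fun j => hLnn i j))
      refine Finset.card_nsmul_le_sum _ _ _ fun j hj => ?_
      have hd : r ≤ ‖y i - y j‖ := by
        have := (Finset.mem_filter.1 hj).2
        rwa [Metric.mem_ball, not_lt, dist_comm, dist_eq_norm] at this
      refine le_trans ?_ (hLu' i j)
      have h1 : r^2 ≤ ‖y i - y j‖^2 := by gcongr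
      have h2 : (1 + ‖y i - y j‖^2)⁻¹ ≤ (1 + r^2)⁻¹ := by gcongr
      have h3 : (1 + r^2)⁻¹ ≤ 1 - r^2/2 := by
        rw [inv_le_iff_one_le_mul₀ (by positivity)]
        nlinarith [sq_nonneg r]
      linarith
    have hc := Finset.card_filter_add_card_filter_not (s := (Finset.univ : Finset (Fin n))) (fun j : Fin n => y j ∈ Metric.ball (y i) r)
    rw [Finset.card_univ, Fintype.card_fin] at hc
    have hc' : ((Finset.univ.filter (fun j : Fin n => y j ∈ Metric.ball (y i) r)).card : ℝ) +
      ((Finset.univ.filter (fun j : Fin n => ¬ y j ∈ Metric.ball (y i) r)).card : ℝ) = n := by exact_mod_cast hc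
    have hb : ((Finset.univ.filter (fun j : Fin n => ¬ y j ∈ Metric.ball (y i) r)).card : ℝ) ≤ r * n := by
      have : ((Finset.univ.filter (fun j : Fin n => ¬ y j ∈ Metric.ball (y i) r)).card : ℝ) * (r^2/2) ≤ (r*n) * (r^2/2) := by
        refine hbad.trans ?_
        have : 332800 * η ≤ r^3/2 := by linarith
        calc n * (332800*η) ≤ n * (r^3/2) := by gcongr
          _ = _ := by ring
      exact le_of_mul_le_mul_right this (by positivity)
    linarith
  · intro k
    rw [Metric.mem_closedBall, dist_eq_norm]
    by_cases hki : k = i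
    · rw [hki, sub_self, norm_zero]; positivity
    -- move k to i
    have hy' := hmin (Function.update y k (y i))
    have E1 : ∑ a ∈ TT n, p a.1 a.2 * Real.log (1 + ‖y a.1 - y a.2‖ ^ 2) -
        ∑ a ∈ TT n, p a.1 a.2 * Real.log (1 + ‖Function.update y k (y i) a.1 - Function.update y k (y i) a.2‖ ^ 2) =
        ∑ j, if j = k then 0 else p k j * (Real.log (1 + ‖y k - y j‖ ^ 2) - Real.log (1 + ‖y i - y j‖ ^ 2)) := by
      rw [← Finset.sum_sub_distrib]
      rw [sum_TT_star (fun a b => p a b * Real.log (1 + ‖y a - y b‖ ^ 2) -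
        p a b * Real.log (1 + ‖Function.update y k (y i) a - Function.update y k (y i) b‖ ^ 2)) ?_ k ?_]
      · refine Finset.sum_congr rfl fun j _ => ?_
        split_ifs with h
        · rfl
        · simp only [Function.update_self, Function.update_of_ne h]; ring
      · intro a b
        rw [hps a b, norm_sub_rev, norm_sub_rev (Function.update y k (y i) a)]
      · intro a b ha hb
        simp [Function.update_of_ne ha, Function.update_of_ne hb]
    have E2 : ∑ a ∈ TT n, (1 + ‖Function.update y k (y i) a.1 - Function.update y k (y i) a.2‖ ^ 2)⁻¹ -
        ∑ a ∈ TT n, (1 + ‖y a.1 - y a.2‖ ^ 2)⁻¹ =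
        ∑ j, if j = k then 0 else ((1 + ‖y i - y j‖ ^ 2)⁻¹ - (1 + ‖y k - y j‖ ^ 2)⁻¹) := by
      rw [← Finset.sum_sub_distrib]
      rw [sum_TT_star (fun a b => (1 + ‖Function.update y k (y i) a - Function.update y k (y i) b‖ ^ 2)⁻¹ -
        (1 + ‖y a - y b‖ ^ 2)⁻¹) ?_ k ?_]
      · refine Finset.sum_congr rfl fun j _ => ?_
        split_ifs with h
        · rfl
        · simp only [Function.update_self, Function.update_of_ne h]
      · intro a b
        rw [norm_sub_rev, norm_sub_rev (y a)]
      · intro a b ha hb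
        simp [Function.update_of_ne ha, Function.update_of_ne hb]
    obtain ⟨Z', hZ'⟩ : ∃ Z', Z' = ∑ a ∈ TT n, (1 + ‖Function.update y k (y i) a.1 - Function.update y k (y i) a.2‖ ^ 2)⁻¹ := ⟨_, rfl⟩
    have hZ'p : 0 < Z' := by rw [hZ']; exact Finset.sum_pos (fun a _ => by positivity) hT
    rw [← hZ'] at hy' E2
    rw [hm] at hy' E2
    have hNm : 0 < (TT n).card * m := by positivity
    have hlog : Real.log Z' - Real.log ((TT n).card * m) ≤ (Z' - (TT n).card * m) / ((TT n).card * m) := by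
      rw [← Real.log_div hZ'p.ne' hNm.ne']
      refine (Real.log_le_sub_one_of_pos (by positivity)).trans (le_of_eq ?_)
      field_simp
    have hmain : ∑ j, (if j = k then 0 else p k j * (Real.log (1 + ‖y k - y j‖ ^ 2) - Real.log (1 + ‖y i - y j‖ ^ 2))) ≤
        (∑ j, if j = k then 0 else ((1 + ‖y i - y j‖ ^ 2)⁻¹ - (1 + ‖y k - y j‖ ^ 2)⁻¹)) / ((TT n).card * m) := by
      rw [← E1, ← E2]; linarith
    have hdiff : ∑ j, (if j = k then 0 else ((1 + ‖y i - y j‖ ^ 2)⁻¹ - (1 + ‖y k - y j‖ ^ 2)⁻¹)) ≤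
        ∑ j, (if j = k then 0 else (1 - (1 + ‖y k - y j‖ ^ 2)⁻¹)) := by
      refine Finset.sum_le_sum fun j _ => ?_
      split_ifs
      · rfl
      · linarith [hu0 i j]
    have hA : ∑ j, (if j = k then 0 else (TT n).card * (p k j * (Real.log (1 + ‖y k - y j‖ ^ 2) - Real.log (1 + ‖y i - y j‖ ^ 2)))) ≤
        m⁻¹ * ∑ j, (if j = k then 0 else (1 - (1 + ‖y k - y j‖ ^ 2)⁻¹)) := by
      have h1 : ∑ j, (if j = k then 0 else (TT n).card * (p k j * (Real.log (1 + ‖y k - y j‖ ^ 2) - Real.log (1 + ‖y i - y j‖ ^ 2)))) =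
        (TT n).card * ∑ j, (if j = k then 0 else p k j * (Real.log (1 + ‖y k - y j‖ ^ 2) - Real.log (1 + ‖y i - y j‖ ^ 2))) := by
        rw [Finset.mul_sum]
        refine Finset.sum_congr rfl fun j _ => ?_
        split_ifs <;> simp
      rw [h1]
      calc _ ≤ (TT n).card * ((∑ j, (if j = k then 0 else (1 - (1 + ‖y k - y j‖ ^ 2)⁻¹))) / ((TT n).card * m)) := by
            gcongr
            exact hmain.trans (by gcongr)
        _ = _ := by field_simp
    have hminv : m⁻¹ ≤ 1 + 166400*η := by
      rw [inv_le_iff_one_le_mul₀ hm0]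
      nlinarith
    -- pointwise lower bound
    have hpt : ∀ j, (1/4) * (1 - (1 + ‖y k - y j‖ ^ 2)⁻¹)^2 - 2 * Real.log (1 + ‖y i - y j‖ ^ 2) - 166401*η ≤
        (if j = k then 0 else (TT n).card * (p k j * (Real.log (1 + ‖y k - y j‖ ^ 2) - Real.log (1 + ‖y i - y j‖ ^ 2)))) -
        m⁻¹ * (if j = k then 0 else (1 - (1 + ‖y k - y j‖ ^ 2)⁻¹)) := by
      intro j
      split_ifs with h
      · subst h
        simp
        have := hLnn i j
        linarith
      · have q := abs_le.1 (hp k j (Ne.symm h))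
        have a1 := hLnn i j
        have a2 := hLnn k j
        have a3 := hLu k j
        have a4 := hu0 k j
        have a5 := hu1 k j
        obtain ⟨u, hu⟩ : ∃ u, u = 1 - (1 + ‖y k - y j‖ ^ 2)⁻¹ := ⟨_, rfl⟩
        obtain ⟨A, hA⟩ : ∃ u, u = Real.log (1 + ‖y k - y j‖ ^ 2) := ⟨_, rfl⟩
        obtain ⟨B, hB⟩ : ∃ u, u = Real.log (1 + ‖y i - y j‖ ^ 2) := ⟨_, rfl⟩
        obtain ⟨P, hP⟩ : ∃ u : ℝ, u = (TT n).card * p k j := ⟨_, rfl⟩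
        rw [← hu] at a3 a4 a5 ⊢
        rw [← hA] at a2 a3 ⊢
        rw [← hB] at a1 ⊢
        rw [← mul_assoc, ← hP]
        rw [← hP] at q
        have c1 : (1-η) * A ≤ P * A := mul_le_mul_of_nonneg_right (by linarith) a2
        have c2 : P * B ≤ 2 * B := mul_le_mul_of_nonneg_right (by linarith) a1
        have c3 : m⁻¹ * u ≤ (1 + 166400*η) * u := mul_le_mul_of_nonneg_right hminv a4
        have c4 : (1-η) * (u + u^2/2) ≤ (1-η) * A := mul_le_mul_of_nonneg_left a3 (by linarith)
        have c5 : η * u ≤ η := mul_le_of_le_one_right hη0 a5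
        have c6 : η * u^2 ≤ 1/10^8 * u^2 := mul_le_mul_of_nonneg_right hη1 (sq_nonneg u)
        linarith [sq_nonneg u]
    have hB := Finset.sum_le_sum (s := Finset.univ) fun j _ => hpt j
    rw [Finset.sum_sub_distrib (f := fun j => (if j = k then 0 else (TT n).card * (p k j * (Real.log (1 + ‖y k - y j‖ ^ 2) - Real.log (1 + ‖y i - y j‖ ^ 2))))), ← Finset.mul_sum] at hB
    simp only [Finset.sum_sub_distrib, ← Finset.mul_sum, Finset.sum_const, Finset.card_univ, Fintype.card_fin, nsmul_eq_mul] at hB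
    have hsq : ∑ j, (1 - (1 + ‖y k - y j‖ ^ 2)⁻¹)^2 ≤ n * (3328004 * η) := by
      linarith
    have hui : ∑ j, (1 - (1 + ‖y i - y j‖ ^ 2)⁻¹) ≤ n * (332800 * η) :=
      (Finset.sum_le_sum fun j _ => hLu' i j).trans hi
    obtain ⟨j, hj⟩ : ∃ j : Fin n, (1 - (1 + ‖y k - y j‖ ^ 2)⁻¹)^2 + (1 - (1 + ‖y i - y j‖ ^ 2)⁻¹) ≤ 3660804 * η := by
      by_contra hc
      push Not at hc
      have h1 : ∑ j : Fin n, (3660804 * η : ℝ) < ∑ j, ((1 - (1 + ‖y k - y j‖ ^ 2)⁻¹)^2 + (1 - (1 + ‖y i - y j‖ ^ 2)⁻¹)) :=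
        Finset.sum_lt_sum_of_nonempty ⟨⟨0, by omega⟩, Finset.mem_univ _⟩ fun j _ => hc j
      rw [Finset.sum_add_distrib] at h1
      simp only [Finset.sum_const, Finset.card_univ, Fintype.card_fin, nsmul_eq_mul] at h1
      linarith
    have conv : ∀ D : ℝ, 0 ≤ D → 1 - (1 + D)⁻¹ ≤ r/2 → D ≤ r := by
      intro D hD h
      have h1 : 1 - r/2 ≤ (1+D)⁻¹ := by linarith
      have h2 : (1+D)⁻¹ * (1 + D) = 1 := by field_simp
      have h3 : (1 - r/2) * (1 + D) ≤ 1 :=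
        (mul_le_mul_of_nonneg_right h1 (by linarith)).trans_eq h2
      have h4 : r * D ≤ D := mul_le_of_le_one_left hD hr1.le
      linarith
    have hkj : ‖y k - y j‖^2 ≤ r := by
      apply conv _ (by positivity)
      refine (le_abs_self _).trans (abs_le_of_sq_le_sq ?_ (by positivity))
      have := hu0 i j
      linarith
    have hij : ‖y i - y j‖^2 ≤ r := by
      apply conv _ (by positivity)
      linarith [sq_nonneg (1 - (1 + ‖y k - y j‖ ^ 2)⁻¹)]
    have g1 := Real.le_sqrt_of_sq_le hkj
    have g2 := Real.le_sqrt_of_sq_le hij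
    calc ‖y k - y i‖ = ‖(y k - y j) - (y i - y j)‖ := by congr 1; abel
      _ ≤ ‖y k - y j‖ + ‖y i - y j‖ := norm_sub_le _ _
      _ ≤ _ := by linarith


open scoped Pointwise in
theorem cap_bound (d : ℕ) (hd : 1 ≤ d) (e : EuclideanSpace ℝ (Fin d)) (he : ‖e‖ = 1) (ε : ℝ)
    (hε : 0 < ε) (hε1 : ε ≤ 1/2) :
    sphereUniform d {x | ε < inner ℝ e (x : EuclideanSpace ℝ (Fin d))} ≤
      ENNReal.ofReal (Real.exp (-(d * ε^2 / 2))) := by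
  haveI : Nonempty (Fin d) := ⟨⟨0, by omega⟩⟩
  have hms : MeasurableSet {x : Metric.sphere (0 : EuclideanSpace ℝ (Fin d)) 1 | ε < inner ℝ e (x : EuclideanSpace ℝ (Fin d))} := by
    apply IsOpen.measurableSet
    apply isOpen_lt continuous_const
    fun_prop
  rw [sphereUniform, Measure.smul_apply, smul_eq_mul, Measure.toSphere_apply' _ hms,
    Measure.toSphere_apply_univ]
  have h1ε : 0 ≤ 1 - ε^2 := by nlinarith
  have hsub : Set.Ioo (0:ℝ) 1 • ((↑) '' {x : Metric.sphere (0 : EuclideanSpace ℝ (Fin d)) 1 | ε < inner ℝ e (x : EuclideanSpace ℝ (Fin d))} : Set (EuclideanSpace ℝ (Fin d))) ⊆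
      Metric.closedBall (ε • e) (Real.sqrt (1 - ε^2)) := by
    rintro _ ⟨t, ht, _, ⟨x, hx, rfl⟩, rfl⟩
    rw [Metric.mem_closedBall, dist_eq_norm]
    apply Real.le_sqrt_of_sq_le
    have hx1 : ‖(x : EuclideanSpace ℝ (Fin d))‖ = 1 := by simpa using x.2
    simp only [Set.mem_setOf_eq] at hx
    simp only
    rw [norm_sub_sq_real, norm_smul, norm_smul, hx1, he, inner_smul_left, inner_smul_right, real_inner_comm]
    simp only [Real.norm_eq_abs, mul_one, sq_abs, conj_trivial]
    obtain ⟨t0, t1⟩ := ht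
    have : t * (ε * ε) ≤ t * (ε * inner ℝ e (x : EuclideanSpace ℝ (Fin d))) := by gcongr
    have h2 : ε^2 ≤ 1/4 := by nlinarith
    have h3 : 0 ≤ (1 - t) * (1 + t - 2 * ε^2) := mul_nonneg (by linarith) (by linarith)
    nlinarith [this, h3]
  have hB0 : (volume : Measure (EuclideanSpace ℝ (Fin d))) (Metric.ball 0 1) ≠ 0 :=
    (Metric.measure_ball_pos _ _ one_pos).ne'
  have hBt : (volume : Measure (EuclideanSpace ℝ (Fin d))) (Metric.ball 0 1) ≠ ⊤ := measure_ball_lt_top.ne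
  have hd0 : (d : ENNReal) ≠ 0 := by exact_mod_cast (by omega : d ≠ 0)
  have hdt : (d : ENNReal) ≠ ⊤ := ENNReal.natCast_ne_top d
  have hvol := (measure_mono hsub).trans_eq (Measure.addHaar_closedBall (volume : Measure (EuclideanSpace ℝ (Fin d))) (ε • e) (Real.sqrt_nonneg (1 - ε^2)))
  rw [finrank_euclideanSpace_fin] at *
  have hexp : Real.sqrt (1 - ε^2) ^ d ≤ Real.exp (-(d * ε^2 / 2)) := by
    have h1 : Real.sqrt (1 - ε^2) ≤ Real.exp (-(ε^2/2)) := by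
      apply Real.sqrt_le_iff.2 ⟨by positivity, ?_⟩
      rw [← Real.exp_nat_mul]
      have := Real.add_one_le_exp (-ε^2)
      refine le_trans ?_ (this.trans_eq ?_)
      · linarith
      · congr 1; push_cast; ring
    calc _ ≤ Real.exp (-(ε^2/2)) ^ d := by gcongr
      _ = _ := by rw [← Real.exp_nat_mul]; congr 1; ring
  calc _ ≤ ((d : ENNReal) * volume (Metric.ball (0 : EuclideanSpace ℝ (Fin d)) 1))⁻¹ *
        ((d : ENNReal) * (ENNReal.ofReal (Real.sqrt (1 - ε^2) ^ d) * volume (Metric.ball (0 : EuclideanSpace ℝ (Fin d)) 1))) := by gcongr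
    _ = ENNReal.ofReal (Real.sqrt (1 - ε^2) ^ d) * (((d : ENNReal) * volume (Metric.ball (0 : EuclideanSpace ℝ (Fin d)) 1))⁻¹ * ((d : ENNReal) * volume (Metric.ball (0 : EuclideanSpace ℝ (Fin d)) 1))) := by ring
    _ = ENNReal.ofReal (Real.sqrt (1 - ε^2) ^ d) := by
      rw [ENNReal.inv_mul_cancel (mul_ne_zero hd0 hB0) (ENNReal.mul_ne_top hdt hBt), mul_one]
    _ ≤ _ := ENNReal.ofReal_le_ofReal hexp

theorem sphereUniform_prob (d : ℕ) (hd : 1 ≤ d) : IsProbabilityMeasure (sphereUniform d) := by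
  haveI : Nonempty (Fin d) := ⟨⟨0, by omega⟩⟩
  constructor
  have hB0 : (volume : Measure (EuclideanSpace ℝ (Fin d))) (Metric.ball 0 1) ≠ 0 :=
    (Metric.measure_ball_pos _ _ one_pos).ne'
  have hBt : (volume : Measure (EuclideanSpace ℝ (Fin d))) (Metric.ball 0 1) ≠ ⊤ := measure_ball_lt_top.ne
  have hd0 : (d : ENNReal) ≠ 0 := by exact_mod_cast (by omega : d ≠ 0)
  have hdt : (d : ENNReal) ≠ ⊤ := ENNReal.natCast_ne_top d
  rw [sphereUniform, Measure.smul_apply, smul_eq_mul, Measure.toSphere_apply_univ, finrank_euclideanSpace_fin]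
  exact ENNReal.inv_mul_cancel (mul_ne_zero hd0 hB0) (ENNReal.mul_ne_top hdt hBt)

theorem cap_bound_abs (d : ℕ) (hd : 1 ≤ d) (e : EuclideanSpace ℝ (Fin d)) (he : ‖e‖ = 1) (ε : ℝ)
    (hε : 0 < ε) (hε1 : ε ≤ 1/2) :
    sphereUniform d {x | ε < |inner ℝ e (x : EuclideanSpace ℝ (Fin d))|} ≤
      2 * ENNReal.ofReal (Real.exp (-(d * ε^2 / 2))) := by
  have hsub : {x : Metric.sphere (0 : EuclideanSpace ℝ (Fin d)) 1 | ε < |inner ℝ e (x : EuclideanSpace ℝ (Fin d))|} ⊆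
    {x | ε < inner ℝ e (x : EuclideanSpace ℝ (Fin d))} ∪ {x | ε < inner ℝ (-e) (x : EuclideanSpace ℝ (Fin d))} := by
    intro x hx
    simp only [Set.mem_setOf_eq, Set.mem_union, inner_neg_left] at hx ⊢
    exact lt_abs.1 hx
  refine (measure_mono hsub).trans ((measure_union_le _ _).trans ?_)
  rw [two_mul]
  gcongr
  · exact cap_bound d hd e he ε hε hε1
  · exact cap_bound d hd (-e) (by rw [norm_neg, he]) ε hε hε1

theorem pair_bound (d : ℕ) (hd : 1 ≤ d) (n : ℕ) (i j : Fin n) (hij : i ≠ j) (ε : ℝ)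
    (hε : 0 < ε) (hε1 : ε ≤ 1/2) :
    Measure.pi (fun _ : Fin n => sphereUniform d)
      {x | ε < |inner ℝ (x i : EuclideanSpace ℝ (Fin d)) (x j : EuclideanSpace ℝ (Fin d))|} ≤
      2 * ENNReal.ofReal (Real.exp (-(d * ε^2 / 2))) := by
  haveI := sphereUniform_prob d hd
  have hind := ProbabilityTheory.iIndepFun_pi (μ := fun _ : Fin n => sphereUniform d)
    (X := fun _ x => x) (fun _ => aemeasurable_id)
  have h2 := hind.indepFun hij
  rw [ProbabilityTheory.indepFun_iff_map_prod_eq_prod_map_map (measurable_pi_apply i).aemeasurable (measurable_pi_apply j).aemeasurable] at h2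
  have m1 : ∀ i : Fin n, Measure.map (fun x : Fin n → Metric.sphere (0 : EuclideanSpace ℝ (Fin d)) 1 => x i)
      (Measure.pi (fun _ : Fin n => sphereUniform d)) = sphereUniform d := fun i =>
    (measurePreserving_eval (fun _ : Fin n => sphereUniform d) i).map_eq
  rw [m1, m1] at h2
  have hS : MeasurableSet {z : Metric.sphere (0 : EuclideanSpace ℝ (Fin d)) 1 × Metric.sphere (0 : EuclideanSpace ℝ (Fin d)) 1 |
      ε < |inner ℝ (z.1 : EuclideanSpace ℝ (Fin d)) (z.2 : EuclideanSpace ℝ (Fin d))|} := by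
    apply IsOpen.measurableSet
    apply isOpen_lt continuous_const
    fun_prop
  have e1 : Measure.pi (fun _ : Fin n => sphereUniform d)
      {x | ε < |inner ℝ (x i : EuclideanSpace ℝ (Fin d)) (x j : EuclideanSpace ℝ (Fin d))|} =
      ((sphereUniform d).prod (sphereUniform d)) {z : Metric.sphere (0 : EuclideanSpace ℝ (Fin d)) 1 × Metric.sphere (0 : EuclideanSpace ℝ (Fin d)) 1 |
      ε < |inner ℝ (z.1 : EuclideanSpace ℝ (Fin d)) (z.2 : EuclideanSpace ℝ (Fin d))|} := by
    rw [← h2, Measure.map_apply ((measurable_pi_apply i).prodMk (measurable_pi_apply j)) hS]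
    rfl
  rw [e1, Measure.prod_apply hS]
  calc _ ≤ ∫⁻ _, 2 * ENNReal.ofReal (Real.exp (-(d * ε^2 / 2))) ∂(sphereUniform d) := by
        apply lintegral_mono
        intro x
        exact cap_bound_abs d hd x (by simpa using x.2) ε hε hε1
    _ = _ := by simp

theorem all_bound (d : ℕ) (hd : 1 ≤ d) (n : ℕ) (ε : ℝ)
    (hε : 0 < ε) (hε1 : ε ≤ 1/2) :
    1 - ENNReal.ofReal (n^2 * (2 * Real.exp (-(d * ε^2 / 2)))) ≤
    Measure.pi (fun _ : Fin n => sphereUniform d)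
      {x | ∀ i j, i ≠ j → |inner ℝ (x i : EuclideanSpace ℝ (Fin d)) (x j : EuclideanSpace ℝ (Fin d))| ≤ ε} := by
  haveI := sphereUniform_prob d hd
  have hc : Measure.pi (fun _ : Fin n => sphereUniform d)
      {x | ∀ i j, i ≠ j → |inner ℝ (x i : EuclideanSpace ℝ (Fin d)) (x j : EuclideanSpace ℝ (Fin d))| ≤ ε}ᶜ ≤
      ENNReal.ofReal (n^2 * (2 * Real.exp (-(d * ε^2 / 2)))) := by
    have hsub : {x : Fin n → Metric.sphere (0 : EuclideanSpace ℝ (Fin d)) 1 | ∀ i j, i ≠ j → |inner ℝ (x i : EuclideanSpace ℝ (Fin d)) (x j : EuclideanSpace ℝ (Fin d))| ≤ ε}ᶜ ⊆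
        ⋃ a ∈ (Finset.univ.filter (fun a : Fin n × Fin n => a.1 ≠ a.2)), {x | ε < |inner ℝ (x a.1 : EuclideanSpace ℝ (Fin d)) (x a.2 : EuclideanSpace ℝ (Fin d))|} := by
      intro x hx
      simp only [Set.mem_compl_iff, Set.mem_setOf_eq, not_forall, not_le] at hx
      obtain ⟨i, j, hij, h⟩ := hx
      simp only [Set.mem_iUnion]
      exact ⟨(i, j), by simp [hij], h⟩
    refine (measure_mono hsub).trans ((measure_biUnion_finset_le _ _).trans ?_)
    calc _ ≤ ∑ a ∈ (Finset.univ.filter (fun a : Fin n × Fin n => a.1 ≠ a.2)), 2 * ENNReal.ofReal (Real.exp (-(d * ε^2 / 2))) :=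
          Finset.sum_le_sum fun a ha => pair_bound d hd n a.1 a.2 (Finset.mem_filter.1 ha).2 ε hε hε1
      _ ≤ ∑ a : Fin n × Fin n, 2 * ENNReal.ofReal (Real.exp (-(d * ε^2 / 2))) :=
          Finset.sum_le_sum_of_subset (Finset.filter_subset _ _)
      _ = _ := by
        rw [Finset.sum_const, Finset.card_univ, Fintype.card_prod, Fintype.card_fin, nsmul_eq_mul,
          ENNReal.ofReal_mul (by positivity), ENNReal.ofReal_mul (by norm_num), ENNReal.ofReal_pow (by positivity)]
        simp [sq]
  rw [tsub_le_iff_right]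
  calc (1:ENNReal) = Measure.pi (fun _ : Fin n => sphereUniform d) Set.univ := by simp
    _ ≤ _ := by
      rw [← Set.union_compl_self {x : Fin n → Metric.sphere (0 : EuclideanSpace ℝ (Fin d)) 1 | ∀ i j, i ≠ j → |inner ℝ (x i : EuclideanSpace ℝ (Fin d)) (x j : EuclideanSpace ℝ (Fin d))| ≤ ε}]
      refine (measure_union_le _ _).trans ?_
      gcongr


theorem pcond_est {n d : ℕ} (hn : 2 ≤ n) (x : Fin n → EuclideanSpace ℝ (Fin d)) (hx : ∀ i, ‖x i‖ = 1)
    (σ : ℝ) (hσ : 0 < σ) (ε : ℝ)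
    (hε : ∀ i j, i ≠ j → |inner ℝ (x i) (x j)| ≤ ε) (i j : Fin n) (hij : i ≠ j) :
    Real.exp (-(2 * (ε / σ^2))) ≤ ((n:ℝ) - 1) * pcond x (fun _ => σ) i j ∧
    ((n:ℝ) - 1) * pcond x (fun _ => σ) i j ≤ Real.exp (2 * (ε / σ^2)) := by
  have hn1 : (0:ℝ) < (n:ℝ) - 1 := by
    have : (2:ℝ) ≤ n := by exact_mod_cast hn
    linarith
  have hterm : ∀ k, i ≠ k → Real.exp (-(1/σ^2)) * Real.exp (-(ε/σ^2)) ≤ Real.exp (-‖x i - x k‖ ^ 2 / (2 * σ ^ 2)) ∧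
      Real.exp (-‖x i - x k‖ ^ 2 / (2 * σ ^ 2)) ≤ Real.exp (-(1/σ^2)) * Real.exp (ε/σ^2) := by
    intro k hk
    have e : -‖x i - x k‖ ^ 2 / (2 * σ ^ 2) = -(1/σ^2) + inner ℝ (x i) (x k) / σ^2 := by
      rw [norm_sub_sq_real, hx, hx]; field_simp; ring
    have hb := abs_le.1 (hε i k hk)
    rw [e, ← Real.exp_add, ← Real.exp_add]
    constructor
    · apply Real.exp_le_exp.2
      have : -ε / σ^2 ≤ inner ℝ (x i) (x k) / σ^2 := by gcongr; exact hb.1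
      rw [neg_div] at this
      linarith
    · gcongr; exact hb.2
  have hcard : ((Finset.univ.erase i).card : ℝ) = (n:ℝ) - 1 := by
    rw [Finset.card_erase_of_mem (Finset.mem_univ _), Finset.card_univ, Fintype.card_fin,
      Nat.cast_sub (by omega)]; simp
  set S := ∑ k ∈ Finset.univ.erase i, Real.exp (-‖x i - x k‖ ^ 2 / (2 * σ ^ 2)) with hS
  have hS1 : ((n:ℝ) - 1) * (Real.exp (-(1/σ^2)) * Real.exp (-(ε/σ^2))) ≤ S := by
    rw [← hcard, ← nsmul_eq_mul]
    exact Finset.card_nsmul_le_sum _ _ _ (fun k hk => (hterm k (Finset.ne_of_mem_erase hk).symm).1)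
  have hS2 : S ≤ ((n:ℝ) - 1) * (Real.exp (-(1/σ^2)) * Real.exp (ε/σ^2)) := by
    rw [← hcard, ← nsmul_eq_mul]
    exact Finset.sum_le_card_nsmul _ _ _ (fun k hk => (hterm k (Finset.ne_of_mem_erase hk).symm).2)
  have hS0 : 0 < S := lt_of_lt_of_le (by positivity) hS1
  have hp : pcond x (fun _ => σ) i j = Real.exp (-‖x i - x j‖ ^ 2 / (2 * σ ^ 2)) / S := rfl
  obtain ⟨t1, t2⟩ := hterm j hij
  rw [hp, ← mul_div_assoc ((n:ℝ) - 1), le_div_iff₀ hS0, div_le_iff₀ hS0]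
  constructor
  · calc _ ≤ Real.exp (-(2 * (ε / σ^2))) * (((n:ℝ) - 1) * (Real.exp (-(1/σ^2)) * Real.exp (ε/σ^2))) := by gcongr
      _ = ((n:ℝ) - 1) * (Real.exp (-(1/σ^2)) * (Real.exp (-(2 * (ε / σ^2))) * Real.exp (ε/σ^2))) := by ring
      _ = ((n:ℝ) - 1) * (Real.exp (-(1/σ^2)) * Real.exp (-(ε/σ^2))) := by
        rw [← Real.exp_add (-(2 * (ε / σ^2)))]; congr 3; ring
      _ ≤ _ := by gcongr
  · calc _ ≤ ((n:ℝ) - 1) * (Real.exp (-(1/σ^2)) * Real.exp (ε/σ^2)) := by gcongr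
      _ = ((n:ℝ) - 1) * (Real.exp (-(1/σ^2)) * (Real.exp (2 * (ε / σ^2)) * Real.exp (-(ε/σ^2)))) := by
        rw [← Real.exp_add (2 * (ε / σ^2))]; congr 3; ring
      _ = Real.exp (2 * (ε / σ^2)) * (((n:ℝ) - 1) * (Real.exp (-(1/σ^2)) * Real.exp (-(ε/σ^2)))) := by ring
      _ ≤ _ := by gcongr

theorem pcond_sum {n d : ℕ} (hn : 2 ≤ n) (x : Fin n → EuclideanSpace ℝ (Fin d)) (σ : Fin n → ℝ) (i : Fin n) :
    (∑ j, if i = j then 0 else pcond x σ i j) = 1 := by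
  have h1 : (∑ j, if i = j then 0 else pcond x σ i j) = ∑ j ∈ Finset.univ.erase i, pcond x σ i j := by
    rw [← Finset.add_sum_erase _ _ (Finset.mem_univ i)]
    simp only [if_true, zero_add]
    apply Finset.sum_congr rfl
    intro j hj
    rw [if_neg (Finset.ne_of_mem_erase hj).symm]
  rw [h1]
  unfold pcond
  rw [← Finset.sum_div]
  apply div_self
  apply ne_of_gt
  apply Finset.sum_pos
  · intros; positivity
  · rw [← Finset.card_pos, Finset.card_erase_of_mem (Finset.mem_univ _), Finset.card_univ, Fintype.card_fin]
    omega

theorem pmat_sum {n d : ℕ} (hn : 2 ≤ n) (x : Fin n → EuclideanSpace ℝ (Fin d)) (σ : Fin n → ℝ) :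
    ∑ a ∈ TT n, pmat x σ a.1 a.2 = 1 := by
  have h := sum_TT_symm (pmat x σ) (fun i j => by unfold pmat; ring)
  have e1 : (∑ i, ∑ j, if i = j then 0 else pmat x σ i j) =
      ((∑ j, ∑ i, if j = i then 0 else pcond x σ j i) + ∑ i, ∑ j, if i = j then 0 else pcond x σ i j) / n := by
    have e0 : (∑ j, ∑ i, if j = i then 0 else pcond x σ j i) = ∑ i, ∑ j, if j = i then 0 else pcond x σ j i :=
      Finset.sum_comm
    nth_rewrite 1 [e0]
    rw [← Finset.sum_add_distrib, Finset.sum_div]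
    refine Finset.sum_congr rfl fun i _ => ?_
    rw [← Finset.sum_add_distrib, Finset.sum_div]
    refine Finset.sum_congr rfl fun j _ => ?_
    by_cases hij : i = j
    · simp [hij]
    · rw [if_neg hij, if_neg hij, if_neg (Ne.symm hij)]; rfl
  rw [e1] at h
  simp only [pcond_sum hn, Finset.sum_const, Finset.card_univ, Fintype.card_fin, nsmul_eq_mul, mul_one] at h
  have hn0 : (n:ℝ) ≠ 0 := by exact_mod_cast (by omega : n ≠ 0)
  have : ((n:ℝ) + n) / n = 2 := by field_simp; ring
  linarith

theorem pmat_est {n d : ℕ} (hn : 2 ≤ n) (x : Fin n → EuclideanSpace ℝ (Fin d)) (hx : ∀ i, ‖x i‖ = 1)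
    (σ : ℝ) (hσ : 0 < σ) (ε : ℝ) (hε0 : 0 ≤ ε) (hε1 : 2 * (ε / σ^2) ≤ 1)
    (hε : ∀ i j, i ≠ j → |inner ℝ (x i) (x j)| ≤ ε) (i j : Fin n) (hij : i ≠ j) :
    |((TT n).card : ℝ) * pmat x (fun _ => σ) i j - 1| ≤ 4 * (ε / σ^2) := by
  have hn0 : (n:ℝ) ≠ 0 := by exact_mod_cast (by omega : n ≠ 0)
  have e : ((TT n).card : ℝ) * pmat x (fun _ => σ) i j =
      (((n:ℝ) - 1) * pcond x (fun _ => σ) j i + ((n:ℝ) - 1) * pcond x (fun _ => σ) i j) / 2 := by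
    have hc := card_TT n
    have : ((TT n).card : ℝ) = n * (n - 1) / 2 := by linarith
    rw [this]; unfold pmat; field_simp
  obtain ⟨a1, a2⟩ := pcond_est hn x hx σ hσ ε hε i j hij
  obtain ⟨b1, b2⟩ := pcond_est hn x hx σ hσ ε hε j i hij.symm
  have ha : 0 ≤ ε / σ^2 := by positivity
  have l1 := Real.add_one_le_exp (-(2 * (ε / σ^2)))
  have l2 : Real.exp (2 * (ε / σ^2)) ≤ 1 + 4 * (ε / σ^2) := by
    have := Real.abs_exp_sub_one_le (x := 2 * (ε / σ^2)) (by rw [abs_of_nonneg (by linarith)]; exact hε1)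
    rw [abs_of_nonneg (a := 2 * (ε / σ^2)) (by linarith)] at this
    have := (abs_le.1 this).2
    linarith
  rw [e, abs_le]
  constructor <;> linarith

theorem pmat_pos {n d : ℕ} (hn : 2 ≤ n) (x : Fin n → EuclideanSpace ℝ (Fin d)) (σ : Fin n → ℝ) (i j : Fin n) :
    0 < pmat x σ i j := by
  have hn0 : (0:ℝ) < (n:ℝ) := by exact_mod_cast (by omega : 0 < n)
  have hc : ∀ i j, 0 < pcond x σ i j := by
    intro i j
    unfold pcond
    apply div_pos (Real.exp_pos _)
    apply Finset.sum_pos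
    · intros; positivity
    · rw [← Finset.card_pos, Finset.card_erase_of_mem (Finset.mem_univ _), Finset.card_univ, Fintype.card_fin]
      omega
  have h1 := hc i j
  have h2 := hc j i
  unfold pmat
  positivity

/-- fix `σ > 0`, `δ ∈ (0,1/2)`, and `r = r(d) ∈ (0,1)` with
`r(d)·d^{1/6-δ/3} → ∞`. There are constants `c, c', C > 0` such that for all sufficiently
large `d`, taking `n = ⌈e^{c·d^{2δ}}⌉` i.i.d. uniform points on `S^{d-1}` and the t-SNE input
distribution `P` with all bandwidths `σ`, with probability at least `1 - e^{-c'·d^{2δ}}`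
every global minimizer of `D(P‖Q)` over `(ℝ²)^n` has at least `(1-r(d))·n` of its points in
some open ball of radius `r(d)` and all its points in some ball of radius `C·√r(d)`. -/
theorem stmt14 (σ : ℝ) (hσ : 0 < σ) (δ : ℝ) (hδ : 0 < δ) (hδ' : δ < 1 / 2)
    (r : ℕ → ℝ) (hr : ∀ d, 0 < r d ∧ r d < 1)
    (hrd : Tendsto (fun d : ℕ => r d * (d : ℝ) ^ ((1 / 6 : ℝ) - δ / 3)) atTop atTop) :
    ∃ c : ℝ, 0 < c ∧ ∃ c' : ℝ, 0 < c' ∧ ∃ C : ℝ, 0 < C ∧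
      ∀ᶠ d : ℕ in atTop, ∀ n : ℕ, n = ⌈Real.exp (c * (d : ℝ) ^ (2 * δ))⌉₊ →
        ENNReal.ofReal (1 - Real.exp (-(c' * (d : ℝ) ^ (2 * δ)))) ≤
          Measure.pi (fun _ : Fin n => sphereUniform d)
            {x : Fin n → Metric.sphere (0 : EuclideanSpace ℝ (Fin d)) 1 |
              ∀ y : Fin n → EuclideanSpace ℝ (Fin 2),
                (∀ y' : Fin n → EuclideanSpace ℝ (Fin 2),
                  KLpairs (pmat (fun k => (x k : EuclideanSpace ℝ (Fin d))) (fun _ => σ)) (qmat y) ≤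
                  KLpairs (pmat (fun k => (x k : EuclideanSpace ℝ (Fin d))) (fun _ => σ)) (qmat y')) →
                (∃ c₀ : EuclideanSpace ℝ (Fin 2),
                  (1 - r d) * n ≤
                    (Finset.univ.filter (fun i : Fin n => y i ∈ Metric.ball c₀ (r d))).card) ∧
                (∃ c₀ : EuclideanSpace ℝ (Fin 2),
                  ∀ i : Fin n, y i ∈ Metric.closedBall c₀ (C * Real.sqrt (r d)))} := by
  refine ⟨1/16, by norm_num, 1/8, by norm_num, 2, by norm_num, ?_⟩
  have hX : Tendsto (fun d : ℕ => (d:ℝ) ^ (2 * δ)) atTop atTop :=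
    (tendsto_rpow_atTop (by linarith)).comp tendsto_natCast_atTop_atTop
  have hE : Tendsto (fun d : ℕ => (d:ℝ) ^ (-(1/2 - δ))) atTop (nhds 0) :=
    (tendsto_rpow_neg_atTop (by linarith)).comp tendsto_natCast_atTop_atTop
  have hM0 : 0 < 4 * 10^8 / σ^2 := by positivity
  filter_upwards [hX.eventually_ge_atTop (16 * Real.log 12), eventually_ge_atTop 1,
    hE.eventually (Iic_mem_nhds (show (0:ℝ) < 1/2 by norm_num)),
    hE.eventually (Iic_mem_nhds (show (0:ℝ) < σ^2/2 by positivity)),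
    hrd.eventually_ge_atTop (max 1 (4 * 10^8 / σ^2))] with d hXd hd hε1 hε2 hrd' n hn
  replace hε1 : (d:ℝ) ^ (-(1/2 - δ)) ≤ 1/2 := hε1
  replace hε2 : (d:ℝ) ^ (-(1/2 - δ)) ≤ σ^2/2 := hε2
  have hd0 : (0:ℝ) < d := by exact_mod_cast hd
  set X := (d:ℝ) ^ (2 * δ) with hXdef
  set ε := (d:ℝ) ^ (-(1/2 - δ)) with hεdef
  have hε0 : 0 < ε := by positivity
  have hdε : d * ε^2 = X := by
    rw [hεdef, hXdef, ← Real.rpow_natCast, ← Real.rpow_mul hd0.le]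
    nth_rewrite 1 [← Real.rpow_one (d:ℝ)]
    rw [← Real.rpow_add hd0]
    congr 1; push_cast; ring
  have hexp12 : 12 ≤ Real.exp (1/16 * X) := by
    rw [← Real.log_le_iff_le_exp (by norm_num)]; linarith
  have hnge : Real.exp (1/16 * X) ≤ n := by rw [hn]; exact Nat.le_ceil _
  have hnle : (n:ℝ) ≤ 2 * Real.exp (1/16 * X) := by
    have := Nat.ceil_lt_add_one (Real.exp_pos (1/16 * X)).le
    rw [hn]; linarith
  have hn12 : 12 ≤ n := by
    have : (12:ℝ) ≤ n := hexp12.trans hnge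
    exact_mod_cast this
  have hn2 : 2 ≤ n := by omega
  have ha : 2 * (ε / σ^2) ≤ 1 := by
    rw [← mul_div_assoc, div_le_one (by positivity)]; linarith
  have hη : 10^8 * (4 * (ε / σ^2)) ≤ (r d)^3 := by
    set M := max 1 (4 * 10^8 / σ^2) with hM
    have hM1 : 1 ≤ M := le_max_left _ _
    have hM2 : 4 * 10^8 / σ^2 ≤ M := le_max_right _ _
    set w := (d:ℝ) ^ ((1 / 6 : ℝ) - δ / 3) with hw
    have hw0 : 0 < w := by positivity
    have hwε : w^3 * ε = 1 := by
      rw [hw, hεdef, ← Real.rpow_natCast, ← Real.rpow_mul hd0.le, ← Real.rpow_add hd0]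
      convert Real.rpow_zero _ using 2
      push_cast; ring
    have h3 : M ≤ (r d)^3 * w^3 := by
      rw [← mul_pow]
      calc M ≤ M^3 := le_self_pow₀ hM1 (by norm_num)
        _ ≤ _ := by gcongr
    calc 10^8 * (4 * (ε / σ^2)) = (4 * 10^8 / σ^2) * ε := by ring
      _ ≤ ((r d)^3 * w^3) * ε := by gcongr; exact hM2.trans h3
      _ = (r d)^3 := by rw [mul_assoc, hwε, mul_one]
  have hbad : (n:ℝ)^2 * (2 * Real.exp (-(d * ε^2 / 2))) ≤ Real.exp (-(1/8 * X)) := by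
    rw [hdε]
    set u := Real.exp (1/16 * X) with hu
    have e1 : Real.exp (-(X/2)) = (u^8)⁻¹ := by
      rw [hu, ← Real.exp_nat_mul, ← Real.exp_neg]; congr 1; push_cast; ring
    have e2 : Real.exp (-(1/8 * X)) = (u^2)⁻¹ := by
      rw [hu, ← Real.exp_nat_mul, ← Real.exp_neg]; congr 1; push_cast; ring
    have hu0 : 0 < u := Real.exp_pos _
    rw [e1, e2]
    calc (n:ℝ)^2 * (2 * (u^8)⁻¹) ≤ (2 * u)^2 * (2 * (u^8)⁻¹) := by gcongr
      _ = 8 * (u^4)⁻¹ * (u^2)⁻¹ := by field_simp; ring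
      _ ≤ 1 * (u^2)⁻¹ := by
        gcongr
        rw [← div_eq_mul_inv, div_le_one (by positivity)]
        calc (8:ℝ) ≤ 12^4 := by norm_num
          _ ≤ u^4 := by gcongr
      _ = _ := one_mul _
  have hall := all_bound d hd n ε hε0 hε1
  refine le_trans ?_ (hall.trans (measure_mono ?_))
  · rw [ENNReal.ofReal_sub _ (Real.exp_pos _).le, ENNReal.ofReal_one]
    exact tsub_le_tsub_left (ENNReal.ofReal_le_ofReal hbad) _
  · intro x hx y hy
    have hx1 : ∀ i, ‖(fun k => (x k : EuclideanSpace ℝ (Fin d))) i‖ = 1 := fun i => by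
      simp
    set p := pmat (fun k => (x k : EuclideanSpace ℝ (Fin d))) (fun _ => σ) with hpdef
    have hsum : ∑ a ∈ TT n, p a.1 a.2 = 1 := pmat_sum hn2 _ _
    have hpos : ∀ i j, i < j → 0 < p i j := fun i j _ => pmat_pos hn2 _ _ i j
    obtain ⟨c₀, h1, h2⟩ := det_main hn12 p (fun i j => by rw [hpdef]; unfold pmat; ring)
      (4 * (ε / σ^2)) (r d) (hr d).1 (hr d).2 hη
      (fun i j hij => pmat_est hn2 _ hx1 σ hσ ε hε0.le ha hx i j hij) hsum y (by
        intro y'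
        have := hy y'
        rw [KL_red hn2 p hpos hsum, KL_red hn2 p hpos hsum] at this
        linarith)
    exact ⟨⟨c₀, h1⟩, ⟨c₀, h2⟩⟩

end
end

section
/- Let p be a probability mass function on a finite set S of cardinality N ≥ 1, and suppose |N·p(x) − 1| ≤ ε for all x ∈ S. Then D(p‖U) ≤ ε², where U is the uniform distribution on S. -/
/-- if `p` is a probability mass function on a finite set `S` of cardinality
`N ≥ 1` with `|N·p(x) - 1| ≤ ε` for all `x`, then `D(p‖U) ≤ ε²`, where `U` is the uniform
distribution on `S`. -/
theorem stmt16 {S : Type*} [Fintype S] (hS : 1 ≤ Fintype.card S)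
    (p : S → ℝ) (ε : ℝ) (hp0 : ∀ x, 0 ≤ p x) (hp1 : ∑ x, p x = 1)
    (hε : ∀ x, |(Fintype.card S : ℝ) * p x - 1| ≤ ε) :
    ∑ x, p x * Real.log (p x / (1 / (Fintype.card S : ℝ))) ≤ ε ^ 2 := by
  have hN : (0 : ℝ) < (Fintype.card S : ℝ) := by exact_mod_cast hS
  have key : ∀ x, p x * Real.log (p x / (1 / (Fintype.card S : ℝ))) ≤
      (ε ^ 2 - 1) / (Fintype.card S : ℝ) + p x := by
    intro x
    have h2 : ((Fintype.card S : ℝ) * p x - 1) ^ 2 ≤ ε ^ 2 :=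
      sq_le_sq' (neg_le_of_abs_le (hε x)) (le_of_abs_le (hε x))
    have h3 : p x * ((Fintype.card S : ℝ) * p x - 1) ≤
        (ε ^ 2 - 1) / (Fintype.card S : ℝ) + p x := by
      rw [← sub_le_iff_le_add, le_div_iff₀ hN]
      nlinarith
    refine le_trans ?_ h3
    rcases (hp0 x).eq_or_lt with h | h
    · simp [← h]
    · refine mul_le_mul_of_nonneg_left ?_ h.le
      have e : p x / (1 / (Fintype.card S : ℝ)) = (Fintype.card S : ℝ) * p x := by
        field_simp
      rw [e]
      exact Real.log_le_sub_one_of_pos (mul_pos hN h)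
  refine (Finset.sum_le_sum fun x _ => key x).trans (le_of_eq ?_)
  rw [Finset.sum_add_distrib, hp1, Finset.sum_const, Finset.card_univ, nsmul_eq_mul]
  field_simp
  ring
end
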